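/- arXiv:2311.04510 — 2 statements merged into one kernel-verified Lean document; each statement's English description precedes it below -/
import Mathlib

section
/- Let M be a nonzero Hilbert space contractively contained in H²(𝔻) (the scalar Hardy space). Suppose M is nearly invariant under the backward shift S* and ‖zh‖_M ≥ ‖h‖_M whenever zh ∈ M, and let g be a unit vector spanning the one-dimensional space M ⊖ (M ∩ zH²(𝔻)). Then N := {f ∈ H²(𝔻) : gf ∈ M} is a vector subspace of H²(𝔻) invariant under S*, every h ∈ M can be written uniquely as h = gf with f ∈ N, and ‖gf‖_M ≥ ‖f‖₂ for all f ∈ N. -/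
noncomputable section
open scoped ENNReal

/-- The Hardy space `H²(𝔻)`, identified isometrically with the space of square-summable
sequences of Taylor coefficients. -/
abbrev H2 := lp (fun _ : ℕ => ℂ) 2

/-- The subspace `zH²(𝔻)`: functions vanishing at `0`. -/
def zH2 : Submodule ℂ H2 where
  carrier := {f | f 0 = 0}
  add_mem' := by
    intro a b ha hb
    simp only [Set.mem_setOf_eq] at *
    simp [lp.coeFn_add, ha, hb]
  zero_mem' := by simp [lp.coeFn_zero]
  smul_mem' := by
    intro c a ha
    simp only [Set.mem_setOf_eq] at *
    simp [lp.coeFn_smul, ha]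

/-- The backward shift `S*` on `H²(𝔻)`. -/
def bsh (f : H2) : H2 :=
  ⟨fun k => f (k + 1), by
    apply memℓp_gen
    have hf : Summable fun i => ‖f i‖ ^ (2 : ℝ≥0∞).toReal :=
      (memℓp_gen_iff (by norm_num)).1 (lp.memℓp f)
    exact hf.comp_injective (add_left_injective 1)⟩

/-- The forward shift (multiplication by `z`) on `H²(𝔻)`. -/
def fsh (f : H2) : H2 :=
  ⟨fun k => match k with | 0 => 0 | (j + 1) => f j, by
    apply memℓp_gen
    have hf : Summable fun i => ‖f i‖ ^ (2 : ℝ≥0∞).toReal :=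
      (memℓp_gen_iff (by norm_num)).1 (lp.memℓp f)
    apply (summable_nat_add_iff 1).mp
    convert hf using 1⟩

/-- The value at `z ∈ 𝔻` of `f ∈ H²(𝔻)`. -/
def ev (f : H2) (z : ℂ) : ℂ := ∑' m, f m * z ^ m

/-- `gRel ι g f m` says that `m ∈ M`, as a function on the disc, equals `g·f`. -/
def gRel {M : Type*} [NormedAddCommGroup M] [InnerProductSpace ℂ M]
    (ι : M →ₗ[ℂ] H2) (g : M) (f : H2) (m : M) : Prop :=
  ∀ z ∈ Metric.ball (0 : ℂ) 1, ev (ι m) z = ev (ι g) z * ev f z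

/-!
Everything but the passage from functions on the disc to Taylor coefficients is a statement about
formal power series. Subtracting from `h ∈ M` the right multiple of `g` leaves an element vanishing
at `0`, which near invariance lets us divide by `z`: `h = c g + z h'`. The two summands are
orthogonal and division by `z` does not increase the norm, so `|c|² + ‖h'‖² ≤ ‖h‖²`. Iterating,
the successive scalars `c₀, c₁, …` satisfy `∑ |cₖ|² ≤ ‖h‖²` and are the Taylor coefficients of
the unique `f` with `h = g f`.
-/

lemma sum_range_iterate_add_le {α A : Type*} [AddCommMonoid A] [PartialOrder A]
    [IsOrderedAddMonoid A] {T : α → α} {u v : α → A} (h : ∀ x, u x + v (T x) ≤ v x)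
    (x : α) (n : ℕ) : ∑ k ∈ Finset.range n, u (T^[k] x) + v (T^[n] x) ≤ v x := by
  induction n with
  | zero => simp
  | succ n ih =>
    rw [Finset.sum_range_succ, Function.iterate_succ_apply', add_assoc]
    exact (add_le_add_right (h _) _).trans ih

lemma exists_lp_norm_le_of_sum_range_le {E : ℕ → Type*} [∀ i, NormedAddCommGroup (E i)]
    {p : ℝ≥0∞} (hp : 0 < p.toReal) {a : ∀ i, E i} {C : ℝ} (hC : 0 ≤ C)
    (h : ∀ n, ∑ i ∈ Finset.range n, ‖a i‖ ^ p.toReal ≤ C ^ p.toReal) :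
    ∃ f : lp E p, (∀ i, f i = a i) ∧ ‖f‖ ≤ C := by
  have hfin (s : Finset ℕ) : ∑ i ∈ s, ‖a i‖ ^ p.toReal ≤ C ^ p.toReal := by
    obtain ⟨n, hn⟩ := s.exists_nat_subset_range
    exact (Finset.sum_le_sum_of_subset_of_nonneg hn fun _ _ _ => by positivity).trans (h n)
  exact ⟨⟨a, memℓp_gen' hfin⟩, fun _ => rfl, lp.norm_le_of_forall_sum_le hp hC hfin⟩

section PowerSeries

open PowerSeries

lemma eq_mul_mk_iterate_of_eq_add_X_mul {R α : Type*} [CommSemiring R] {φ : α → R⟦X⟧}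
    {γ : R⟦X⟧} {c : α → R} {T : α → α} (h : ∀ x, φ x = c x • γ + X * φ (T x)) (x : α) :
    φ x = γ * mk fun k => c (T^[k] x) := by
  have mk_step (x : α) : (mk fun k => c (T^[k] x)) = C (c x) + X * mk fun k => c (T^[k] (T x)) := by
    rw [eq_X_mul_shift_add_const (mk _), add_comm]
    simp
  ext n
  induction n generalizing x with
  | zero => simp [h x, mk_step x, mul_comm]
  | succ n ih =>
    rw [h x, mk_step x, mul_add, mul_left_comm, map_add, map_add, coeff_succ_X_mul,
      coeff_succ_X_mul, ih, smul_eq_C_mul, mul_comm]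

lemma hasSum_coeff_mul_mul_pow {R : Type*} [NormedCommRing R] [CompleteSpace R] {φ ψ : R⟦X⟧}
    {z : R} (hφ : Summable fun n => ‖coeff n φ * z ^ n‖)
    (hψ : Summable fun n => ‖coeff n ψ * z ^ n‖) :
    HasSum (fun n => coeff n (φ * ψ) * z ^ n)
      ((∑' n, coeff n φ * z ^ n) * ∑' n, coeff n ψ * z ^ n) := by
  have cauchy_term (n : ℕ) : coeff n (φ * ψ) * z ^ n =
      ∑ p ∈ Finset.HasAntidiagonal.antidiagonal n,
        coeff p.1 φ * z ^ p.1 * (coeff p.2 ψ * z ^ p.2) := by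
    rw [coeff_mul, Finset.sum_mul]
    refine Finset.sum_congr rfl fun p hp => ?_
    rw [← Finset.HasAntidiagonal.mem_antidiagonal.1 hp, pow_add]
    ring
  simp_rw [cauchy_term, tsum_mul_tsum_eq_tsum_sum_antidiagonal_of_summable_norm hφ hψ]
  exact (summable_norm_sum_mul_antidiagonal_of_summable_norm hφ hψ).of_norm.hasSum

lemma eq_of_eventually_hasSum_coeff_mul_pow {𝕜 : Type*} [NontriviallyNormedField 𝕜] {φ ψ : 𝕜⟦X⟧}
    {F : 𝕜 → 𝕜} (hφ : ∀ᶠ z in nhds 0, HasSum (fun n => coeff n φ * z ^ n) (F z))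
    (hψ : ∀ᶠ z in nhds 0, HasSum (fun n => coeff n ψ * z ^ n) (F z)) : φ = ψ := by
  have expansion {χ : 𝕜⟦X⟧} (hχ : ∀ᶠ z in nhds 0, HasSum (fun n => coeff n χ * z ^ n) (F z)) :
      HasFPowerSeriesAt F (.ofScalars 𝕜 fun n => coeff n χ) 0 := by
    rw [hasFPowerSeriesAt_iff]
    simpa only [FormalMultilinearSeries.coeff_ofScalars, zero_add, smul_eq_mul, mul_comm] using hχ
  have hcoeff := FormalMultilinearSeries.ofScalars_series_injective 𝕜 𝕜
    ((expansion hφ).eq_formalMultilinearSeries (expansion hψ))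
  exact PowerSeries.ext (congrFun hcoeff)

section TaylorSeries

variable {𝕜 : Type*} [NormedField 𝕜] {p : ℝ≥0∞}

/-- The formal power series `∑ aₙ Xⁿ` of a sequence `a` in `ℓᵖ(ℕ)`. For `p = 2` this is the Taylor
series of a function in the Hardy space. -/
def taylorSeries : lp (fun _ : ℕ => 𝕜) p →ₗ[𝕜] 𝕜⟦X⟧ where
  toFun f := mk f
  map_add' _ _ := rfl
  map_smul' _ _ := rfl

@[simp]
lemma coeff_taylorSeries (f : lp (fun _ : ℕ => 𝕜) p) (n : ℕ) : coeff n (taylorSeries f) = f n :=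
  coeff_mk n f

lemma taylorSeries_injective :
    Function.Injective (taylorSeries : lp (fun _ : ℕ => 𝕜) p → 𝕜⟦X⟧) := fun f g h => by
  ext n
  simpa using congrArg (coeff n) h

lemma taylorSeries_eq_add_X_mul {f f' : lp (fun _ : ℕ => 𝕜) p} (h : ∀ n, f' n = f (n + 1)) :
    taylorSeries f = C (f 0) + X * taylorSeries f' := by
  rw [eq_X_mul_shift_add_const (taylorSeries f), add_comm]
  have hshift : (mk fun n => coeff (n + 1) (taylorSeries f)) = taylorSeries f' := by
    ext n
    simp only [coeff_mk, coeff_taylorSeries, h]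
  rw [hshift, ← coeff_zero_eq_constantCoeff_apply, coeff_taylorSeries]

end TaylorSeries

section NearlyInvariant

variable {R M : Type*} [CommRing R] [AddCommGroup M] [Module R M]

/-- The space `M`, realised as power series through `ι`, is nearly invariant under the backward
shift: if `h ∈ M` vanishes at `0`, then `h / X ∈ M`. -/
def NearlyInvariant (ι : M →ₗ[R] R⟦X⟧) : Prop :=
  ∀ h, coeff 0 (ι h) = 0 → ∃ h', ι h = X * ι h'

/-- The subspace `M ∩ X R⟦X⟧` of the elements of `M` vanishing at `0`, where `M` is realised as
power series through `ι`. -/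
def vanishingAtZero (ι : M →ₗ[R] R⟦X⟧) : Submodule R M :=
  LinearMap.ker (coeff 0 ∘ₗ ι)

@[simp]
lemma mem_vanishingAtZero {ι : M →ₗ[R] R⟦X⟧} {h : M} :
    h ∈ vanishingAtZero ι ↔ coeff 0 (ι h) = 0 :=
  Iff.rfl

end NearlyInvariant

section MultiplierSpace

variable {𝕜 M : Type*} [NormedField 𝕜] [AddCommGroup M] [Module 𝕜 M] {p : ℝ≥0∞}

/-- The space `{f ∈ ℓᵖ(ℕ) : g f ∈ M}`, the product being that of power series. For `p = 2` it is the
space `N` of the theorem. -/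
def multiplierSpace (p : ℝ≥0∞) (ι : M →ₗ[𝕜] 𝕜⟦X⟧) (g : M) :
    Submodule 𝕜 (lp (fun _ : ℕ => 𝕜) p) :=
  (LinearMap.range ι).comap (LinearMap.mulLeft 𝕜 (ι g) ∘ₗ taylorSeries)

lemma mem_multiplierSpace {ι : M →ₗ[𝕜] 𝕜⟦X⟧} {g : M} {f : lp (fun _ : ℕ => 𝕜) p} :
    f ∈ multiplierSpace p ι g ↔ ∃ m, ι m = ι g * taylorSeries f :=
  Iff.rfl

lemma NearlyInvariant.mem_multiplierSpace_of_shift {ι : M →ₗ[𝕜] 𝕜⟦X⟧} (hι : NearlyInvariant ι)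
    {g : M} {f f' : lp (fun _ : ℕ => 𝕜) p} (hf : f ∈ multiplierSpace p ι g)
    (h : ∀ n, f' n = f (n + 1)) : f' ∈ multiplierSpace p ι g := by
  obtain ⟨m, hm⟩ := mem_multiplierSpace.1 hf
  have hsub : ι (m - f 0 • g) = X * (ι g * taylorSeries f') := by
    rw [map_sub, map_smul, hm, taylorSeries_eq_add_X_mul h, smul_eq_C_mul]
    ring
  obtain ⟨m', hm'⟩ := hι (m - f 0 • g) (by rw [hsub, coeff_zero_X_mul])
  exact mem_multiplierSpace.2 ⟨m', X_mul_cancel (hm'.symm.trans hsub)⟩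

end MultiplierSpace

section ShiftExpansive

variable {R M : Type*} [CommRing R] [NormedAddCommGroup M] [Module R M]

/-- Multiplication by `X` does not decrease norms within `M`, realised as power series through
`ι`. -/
def ShiftExpansive (ι : M →ₗ[R] R⟦X⟧) : Prop :=
  ∀ h m, ι m = X * ι h → ‖h‖ ≤ ‖m‖

lemma ShiftExpansive.injective {ι : M →ₗ[R] R⟦X⟧} (hι : ShiftExpansive ι) :
    Function.Injective ι := by
  rw [injective_iff_map_eq_zero]
  intro m hm
  -- `0 = X * ι m`, so `‖m‖` is bounded by `‖0‖`.
  simpa using hι m 0 (by simp [hm])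

end ShiftExpansive

section WanderingVector

variable {𝕜 M : Type*} [RCLike 𝕜] [NormedAddCommGroup M] [InnerProductSpace 𝕜 M]
  {ι : M →ₗ[𝕜] 𝕜⟦X⟧} {g : M}

lemma coeff_zero_ne_zero_of_mem_orthogonal (hg : g ∈ (vanishingAtZero ι)ᗮ) (hg0 : g ≠ 0) :
    coeff 0 (ι g) ≠ 0 := fun h =>
  hg0 (Submodule.disjoint_def.1 (Submodule.orthogonal_disjoint _) g h hg)

lemma NearlyInvariant.exists_eq_smul_add_X_mul (hnear : NearlyInvariant ι)
    (hexp : ShiftExpansive ι) (hg : g ∈ (vanishingAtZero ι)ᗮ) (hg1 : ‖g‖ = 1) (h : M) :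
    ∃ (c : 𝕜) (h' : M), ι h = c • ι g + X * ι h' ∧ ‖c‖ ^ 2 + ‖h'‖ ^ 2 ≤ ‖h‖ ^ 2 := by
  have hg0 : coeff 0 (ι g) ≠ 0 :=
    coeff_zero_ne_zero_of_mem_orthogonal hg (norm_ne_zero_iff.1 (by simp [hg1]))
  set c : 𝕜 := coeff 0 (ι h) / coeff 0 (ι g)
  have hr : coeff 0 (ι (h - c • g)) = 0 := by
    rw [map_sub, map_smul, map_sub, map_smul, smul_eq_mul, div_mul_cancel₀ _ hg0, sub_self]
  obtain ⟨h', hh'⟩ := hnear _ hr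
  refine ⟨c, h', by rw [← hh', ← map_smul, ← map_add, add_sub_cancel], ?_⟩
  have horth : inner 𝕜 (c • g) (h - c • g) = 0 :=
    Submodule.inner_left_of_mem_orthogonal (mem_vanishingAtZero.2 hr) (Submodule.smul_mem _ c hg)
  calc ‖c‖ ^ 2 + ‖h'‖ ^ 2 ≤ ‖c • g‖ ^ 2 + ‖h - c • g‖ ^ 2 := by
        rw [norm_smul, hg1, mul_one]
        gcongr
        exact hexp h' _ hh'
    _ = ‖h‖ ^ 2 := by
        simpa only [sq, add_sub_cancel] using
          (norm_add_sq_eq_norm_sq_add_norm_sq_of_inner_eq_zero _ _ horth).symm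

lemma NearlyInvariant.exists_eq_mul_taylorSeries (hnear : NearlyInvariant ι)
    (hexp : ShiftExpansive ι) (hg : g ∈ (vanishingAtZero ι)ᗮ) (hg1 : ‖g‖ = 1) (h : M) :
    ∃ f : lp (fun _ : ℕ => 𝕜) 2, ι h = ι g * taylorSeries f ∧ ‖f‖ ≤ ‖h‖ := by
  choose c T hstep henergy using hnear.exists_eq_smul_add_X_mul hexp hg hg1
  have hsum (n : ℕ) : ∑ k ∈ Finset.range n, ‖c (T^[k] h)‖ ^ 2 ≤ ‖h‖ ^ 2 :=
    (le_add_of_nonneg_right (sq_nonneg ‖T^[n] h‖)).trans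
      (sum_range_iterate_add_le (u := (‖c ·‖ ^ 2)) (v := (‖·‖ ^ 2)) henergy h n)
  obtain ⟨f, hf, hfh⟩ : ∃ f : lp (fun _ : ℕ => 𝕜) 2, (∀ k, f k = c (T^[k] h)) ∧ ‖f‖ ≤ ‖h‖ :=
    exists_lp_norm_le_of_sum_range_le (by simp) (norm_nonneg h) (by simpa using hsum)
  refine ⟨f, ?_, hfh⟩
  rw [eq_mul_mk_iterate_of_eq_add_X_mul hstep h]
  congr 1
  ext k
  simp [hf]

theorem stmt4_general (hnear : NearlyInvariant ι) (hexp : ShiftExpansive ι)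
    (hg : g ∈ (vanishingAtZero ι)ᗮ) (hg1 : ‖g‖ = 1) :
    ∃ N : Submodule 𝕜 (lp (fun _ : ℕ => 𝕜) 2),
      (N : Set (lp (fun _ : ℕ => 𝕜) 2)) = {f | ∃ m, ι m = ι g * taylorSeries f} ∧
      (∀ f ∈ N, ∀ f' : lp (fun _ : ℕ => 𝕜) 2, (∀ n, f' n = f (n + 1)) → f' ∈ N) ∧
      (∀ m, ∃! f : lp (fun _ : ℕ => 𝕜) 2, ι m = ι g * taylorSeries f) ∧
      (∀ (f : lp (fun _ : ℕ => 𝕜) 2) (m m' : M),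
        ι m = ι g * taylorSeries f → ι m' = ι g * taylorSeries f → m = m') ∧
      (∀ (f : lp (fun _ : ℕ => 𝕜) 2) (m : M), ι m = ι g * taylorSeries f → ‖f‖ ≤ ‖m‖) := by
  have hιg : ι g ≠ 0 := fun h =>
    coeff_zero_ne_zero_of_mem_orthogonal hg (norm_ne_zero_iff.1 (by simp [hg1])) (by simp [h])
  have hcancel {f f' : lp (fun _ : ℕ => 𝕜) 2}
      (h : ι g * taylorSeries f = ι g * taylorSeries f') : f = f' :=
    taylorSeries_injective (mul_left_cancel₀ hιg h)
  have hfactor := hnear.exists_eq_mul_taylorSeries hexp hg hg1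
  refine ⟨multiplierSpace 2 ι g, rfl, fun f hf f' => hnear.mem_multiplierSpace_of_shift hf,
    fun m => ?_, fun f m m' hm hm' => hexp.injective (hm.trans hm'.symm), fun f m hm => ?_⟩
  · obtain ⟨f, hf, -⟩ := hfactor m
    exact ⟨f, hf, fun f' hf' => hcancel (hf'.symm.trans hf)⟩
  · obtain ⟨f', hf', hle⟩ := hfactor m
    rwa [hcancel (hm.symm.trans hf')]

end WanderingVector

end PowerSeries

section HardySpace

open PowerSeries

lemma summable_norm_taylorSeries (f : H2) {z : ℂ} (hz : z ∈ Metric.ball (0 : ℂ) 1) :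
    Summable fun n => ‖coeff n (taylorSeries f) * z ^ n‖ := by
  rw [mem_ball_zero_iff] at hz
  refine Summable.of_nonneg_of_le (fun _ => norm_nonneg _) (fun n => ?_)
    ((summable_geometric_of_lt_one (norm_nonneg z) hz).mul_left ‖f‖)
  rw [norm_mul, norm_pow, coeff_taylorSeries]
  gcongr
  exact lp.norm_apply_le_norm two_ne_zero f n

lemma ev_eq_tsum_taylorSeries (f : H2) (z : ℂ) :
    ev f z = ∑' n, coeff n (taylorSeries f) * z ^ n := by
  simp only [ev, coeff_taylorSeries]

lemma forall_ev_eq_mul_iff {f g h : H2} :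
    (∀ z ∈ Metric.ball (0 : ℂ) 1, ev h z = ev g z * ev f z) ↔
      taylorSeries h = taylorSeries g * taylorSeries f := by
  have hasSum_mul {z : ℂ} (hz : z ∈ Metric.ball (0 : ℂ) 1) :
      HasSum (fun n => coeff n (taylorSeries g * taylorSeries f) * z ^ n) (ev g z * ev f z) := by
    simpa only [ev_eq_tsum_taylorSeries] using hasSum_coeff_mul_mul_pow
      (summable_norm_taylorSeries g hz) (summable_norm_taylorSeries f hz)
  constructor
  · intro heq
    have hball := Metric.ball_mem_nhds (0 : ℂ) one_pos
    refine eq_of_eventually_hasSum_coeff_mul_pow (F := ev h) ?_ ?_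
    · filter_upwards [hball] with z hz
      simpa only [ev_eq_tsum_taylorSeries] using (summable_norm_taylorSeries h hz).of_norm.hasSum
    · filter_upwards [hball] with z hz
      simpa only [heq z hz] using hasSum_mul hz
  · intro heq z hz
    rw [← (hasSum_mul hz).tsum_eq, ev_eq_tsum_taylorSeries, heq]

lemma gRel_iff_taylorSeries {M : Type*} [NormedAddCommGroup M] [InnerProductSpace ℂ M]
    {ι : M →ₗ[ℂ] H2} {g : M} {f : H2} {m : M} :
    gRel ι g f m ↔
      (taylorSeries ∘ₗ ι) m = (taylorSeries ∘ₗ ι) g * taylorSeries f :=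
  forall_ev_eq_mul_iff

lemma taylorSeries_fsh (f : H2) : taylorSeries (fsh f) = X * taylorSeries f := by
  ext n
  cases n <;> simp [fsh, coeff_succ_X_mul]

lemma fsh_bsh {f : H2} (hf : f 0 = 0) : fsh (bsh f) = f := by
  ext n
  cases n with
  | zero => exact hf.symm
  | succ n => rfl

lemma nearlyInvariant_taylorSeries_comp {M : Type*} [AddCommGroup M] [Module ℂ M]
    {ι : M →ₗ[ℂ] H2} (h : ∀ f, ι f 0 = 0 → ∃ g, ι g = bsh (ι f)) :
    NearlyInvariant (taylorSeries ∘ₗ ι) := fun f hf => by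
  have hf0 : ι f 0 = 0 := by simpa only [LinearMap.comp_apply, coeff_taylorSeries] using hf
  obtain ⟨g, hg⟩ := h f hf0
  exact ⟨g, by rw [LinearMap.comp_apply, LinearMap.comp_apply, hg, ← taylorSeries_fsh, fsh_bsh hf0]⟩

lemma shiftExpansive_taylorSeries_comp {M : Type*} [NormedAddCommGroup M] [Module ℂ M]
    {ι : M →ₗ[ℂ] H2} (h : ∀ h m, ι m = fsh (ι h) → ‖h‖ ≤ ‖m‖) :
    ShiftExpansive (taylorSeries ∘ₗ ι) := fun f m hm =>
  h f m (taylorSeries_injective (hm.trans (taylorSeries_fsh _).symm))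

lemma vanishingAtZero_taylorSeries_comp {M : Type*} [AddCommGroup M] [Module ℂ M]
    (ι : M →ₗ[ℂ] H2) : vanishingAtZero (taylorSeries ∘ₗ ι) = zH2.comap ι := by
  ext m
  rw [mem_vanishingAtZero, LinearMap.comp_apply, coeff_taylorSeries]
  rfl

end HardySpace

/- STATEMENT 4: Let M be a nonzero Hilbert space contractively contained in H²(𝔻), nearly
invariant under S*, with ‖zh‖_M ≥ ‖h‖_M whenever zh ∈ M, and let g be a unit vector spanning
the one-dimensional space M ⊖ (M ∩ zH²(𝔻)).  Then N := {f ∈ H²(𝔻) : gf ∈ M} is an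
S*-invariant vector subspace of H²(𝔻), every h ∈ M is uniquely h = gf with f ∈ N, and
‖gf‖_M ≥ ‖f‖₂ for all f ∈ N. -/
theorem stmt4
    (M : Type*) [NormedAddCommGroup M] [InnerProductSpace ℂ M] [CompleteSpace M]
    [Nontrivial M]
    (ι : M →ₗ[ℂ] H2) (hinj : Function.Injective ι)
    (hcontr : ∀ m : M, ‖ι m‖ ≤ ‖m‖)
    -- nearly invariant under S* :
    (hnearly : ∀ f : M, ι f 0 = 0 → ∃ g : M, ι g = bsh (ι f))
    -- ‖zh‖_M ≥ ‖h‖_M whenever zh ∈ M :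
    (hz : ∀ h m : M, ι m = fsh (ι h) → ‖h‖ ≤ ‖m‖)
    -- g is a unit vector spanning M ⊖ (M ∩ zH²(𝔻)) :
    (g : M) (hg1 : ‖g‖ = 1)
    (hgspan : (zH2.comap ι)ᗮ = Submodule.span ℂ {g}) :
    ∃ N : Submodule ℂ H2,
      -- N = {f ∈ H²(𝔻) : gf ∈ M}
      (N : Set H2) = {f : H2 | ∃ m : M, gRel ι g f m} ∧
      -- N is invariant under the backward shift
      (∀ f ∈ N, bsh f ∈ N) ∧
      -- every h ∈ M can be written uniquely as h = gf with f ∈ N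
      (∀ m : M, ∃! f : H2, gRel ι g f m) ∧
      (∀ (f : H2) (m m' : M), gRel ι g f m → gRel ι g f m' → m = m') ∧
      -- ‖gf‖_M ≥ ‖f‖₂ for all f ∈ N
      (∀ (f : H2) (m : M), gRel ι g f m → ‖f‖ ≤ ‖m‖) := by
  have hg : g ∈ (vanishingAtZero (taylorSeries ∘ₗ ι))ᗮ := by
    rw [vanishingAtZero_taylorSeries_comp, hgspan]
    exact Submodule.mem_span_singleton_self g
  obtain ⟨N, hN, hshift, hrest⟩ := stmt4_general (nearlyInvariant_taylorSeries_comp hnearly)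
    (shiftExpansive_taylorSeries_comp hz) hg hg1
  simp only [gRel_iff_taylorSeries]
  exact ⟨N, hN, fun f hf => hshift f hf (bsh f) fun _ => rfl, hrest⟩
end
end

section
/- Let 𝒟 be the Dirichlet space of analytic functions f(z) = Σ_{i≥0} a_i z^i on the open unit disc with ‖f‖²_𝒟 = Σ_{i≥0} |a_i|²(i + 1) < ∞. Let θ be a bounded analytic function on 𝔻 with ‖θ‖_∞ = 1 and θ(0) > 0, and let M = θ𝒟 with norm ‖θf‖_M := ‖f‖_𝒟. Then the S*-invariant vector subspace N = {f ∈ H²(𝔻) : θf ∈ M} arising in the representation M = θN equals 𝒟, and 𝒟 is not a closed subspace of H²(𝔻) (so the S*-invariant subspace in the representation of a nearly S*-invariant contractively contained Hilbert space need not be closed). -/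
noncomputable section
open scoped ENNReal

/-- The open unit disc. -/
def Disc : Set ℂ := Metric.ball (0 : ℂ) 1

/-- Membership in the Dirichlet space `𝒟`: `Σ |aᵢ|²(i+1) < ∞`. -/
def DirMem (f : H2) : Prop := Summable fun i : ℕ => ‖f i‖ ^ 2 * ((i : ℝ) + 1)

/-- `ThetaRel θ h f` says `h = θ·f` on the disc with `f` in the Dirichlet space,
i.e. `h` is the element `θf` of `M = θ𝒟`, with representative `f`. -/
def ThetaRel (θ : ℂ → ℂ) (h f : H2) : Prop :=
  DirMem f ∧ ∀ z ∈ Disc, ev h z = θ z * ev f z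

/-! By Parseval's identity the mean of `|f|²` over the circle of radius `r` is `Σ |aₙ|² r²ⁿ`, so an
analytic function on the disc lies in `H²` exactly when these means stay bounded as `r → 1`. Hence a
bounded analytic `θ` multiplies `H²` into itself, and `θf` is defined in `H²` for every `f ∈ 𝒟`.
Conversely, `θf = θf'` with `f' ∈ 𝒟` forces `f = f'`, since the ring of analytic functions on the
disc has no zero divisors. Finally, `𝒟` contains all polynomials, so it is dense in `H²`, but it
misses `Σ zⁿ / (n + 1)` because the harmonic series diverges. -/

open AddCircle Filter MeasureTheory Metric Real Set Topology

theorem hasSum_sq_norm_of_orthonormal {𝕜 E ι : Type*} [RCLike 𝕜] [SeminormedAddCommGroup E]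
    [InnerProductSpace 𝕜 E] {v : ι → E} (hv : Orthonormal 𝕜 v) {a : ι → 𝕜} {x : E}
    (hx : HasSum (fun i => a i • v i) x) : HasSum (fun i => ‖a i‖ ^ 2) (‖x‖ ^ 2) := by
  have pythagoras (s : Finset ι) : ‖∑ i ∈ s, a i • v i‖ ^ 2 = ∑ i ∈ s, ‖a i‖ ^ 2 := by
    rw [← inner_self_eq_norm_sq (𝕜 := 𝕜), hv.inner_sum]
    simp only [RCLike.conj_mul, ← RCLike.ofReal_pow, map_sum, RCLike.ofReal_re]
  exact (hx.norm.pow 2).congr pythagoras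

theorem norm_toLp_two_sq {𝕜 X : Type*} [RCLike 𝕜] [TopologicalSpace X] [CompactSpace X]
    [MeasurableSpace X] [BorelSpace X] {μ : Measure X} [IsFiniteMeasure μ] (g : C(X, 𝕜)) :
    ‖ContinuousMap.toLp (E := 𝕜) 2 μ 𝕜 g‖ ^ 2 = ∫ x, ‖g x‖ ^ 2 ∂μ := by
  have h := ContinuousMap.inner_toLp μ g g
  simp only [inner_self_eq_norm_sq_to_K, RCLike.mul_conj] at h
  exact_mod_cast h

theorem hasSum_sq_norm_of_hasSum_fourier {T : ℝ} [Fact (0 < T)] {ι : Type*} {k : ι → ℤ}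
    (hk : Function.Injective k) {a : ι → ℂ} {g : C(AddCircle T, ℂ)}
    (hg : HasSum (fun i => a i • fourier (k i)) g) :
    HasSum (fun i => ‖a i‖ ^ 2) (∫ t, ‖g t‖ ^ 2 ∂haarAddCircle) := by
  have h_L2 := (ContinuousMap.toLp (E := ℂ) 2 haarAddCircle ℂ).hasSum hg
  simp only [map_smul] at h_L2
  rw [← norm_toLp_two_sq]
  exact hasSum_sq_norm_of_orthonormal (orthonormal_fourier.comp k hk) h_L2

theorem hasSum_sq_norm_circleAverage {a : ℕ → ℂ} {f : ℂ → ℂ} {c : ℂ} {r : ℝ}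
    (hf : ∀ z ∈ sphere c |r|, HasSum (fun n => a n * (z - c) ^ n) (f z)) :
    HasSum (fun n => ‖a n * (r : ℂ) ^ n‖ ^ 2) (circleAverage (fun z => ‖f z‖ ^ 2) c r) := by
  have : Fact (0 < 2 * π) := ⟨two_pi_pos⟩
  have h_coeff : Summable fun n => a n * (r : ℂ) ^ n := by
    simpa using (hf (c + r) (by simp)).summable
  have h_fourier : Summable fun n : ℕ =>
      (a n * (r : ℂ) ^ n) • (fourier (n : ℤ) : C(AddCircle (2 * π), ℂ)) :=
    .of_norm (by simpa only [norm_smul, fourier_norm, mul_one] using h_coeff.norm)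
  obtain ⟨g, hg⟩ := h_fourier
  have hg_eq (t : ℝ) : g t = f (circleMap c r t) := by
    refine ((ContinuousMap.evalCLM ℂ (t : AddCircle (2 * π))).hasSum hg).unique ?_
    convert hf _ (circleMap_mem_sphere' c r t) using 2 with n
    simp [circleMap, fourier_apply, toCircle_nsmul, toCircle_apply_mk, mul_pow, mul_assoc]
  have h_int : circleAverage (fun z => ‖f z‖ ^ 2) c r = ∫ t, ‖g t‖ ^ 2 ∂haarAddCircle := by
    rw [integral_haarAddCircle, ← AddCircle.intervalIntegral_preimage (2 * π) 0, circleAverage]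
    simp [hg_eq]
  exact h_int ▸ hasSum_sq_norm_of_hasSum_fourier Nat.cast_injective hg

theorem summable_sq_norm_of_circleAverage_le {a : ℕ → ℂ} {f : ℂ → ℂ} {c : ℂ} {C : ℝ}
    (hf : ∀ z ∈ ball c 1, HasSum (fun n => a n * (z - c) ^ n) (f z))
    (hC : ∀ r ∈ Ioo (0 : ℝ) 1, circleAverage (fun z => ‖f z‖ ^ 2) c r ≤ C) :
    Summable fun n => ‖a n‖ ^ 2 := by
  refine summable_of_sum_le (c := C) (fun n => sq_nonneg ‖a n‖) fun s => ?_
  have h_le : ∀ r ∈ Ioo (0 : ℝ) 1, ∑ n ∈ s, ‖a n * (r : ℂ) ^ n‖ ^ 2 ≤ C := by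
    rintro r ⟨hr0, hr1⟩
    have h_abs : |r| < 1 := by rwa [abs_of_pos hr0]
    have parseval := hasSum_sq_norm_circleAverage fun z hz => hf z (sphere_subset_ball h_abs hz)
    exact (sum_le_hasSum s (fun _ _ => sq_nonneg _) parseval).trans (hC r ⟨hr0, hr1⟩)
  have h_lim : Tendsto (fun r : ℝ => ∑ n ∈ s, ‖a n * (r : ℂ) ^ n‖ ^ 2) (𝓝[<] 1)
      (𝓝 (∑ n ∈ s, ‖a n‖ ^ 2)) := by
    have h_cont : Continuous fun r : ℝ => ∑ n ∈ s, ‖a n * (r : ℂ) ^ n‖ ^ 2 := by fun_prop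
    simpa using (h_cont.tendsto 1).mono_left nhdsWithin_le_nhds
  exact le_of_tendsto h_lim (mem_of_superset (Ioo_mem_nhdsLT one_pos) h_le)

theorem one_le_radius_of_norm_le {𝕜 E F : Type*} [NontriviallyNormedField 𝕜]
    [NormedAddCommGroup E] [NormedSpace 𝕜 E] [NormedAddCommGroup F] [NormedSpace 𝕜 F]
    {p : FormalMultilinearSeries 𝕜 E F} {C : ℝ} (hp : ∀ n, ‖p n‖ ≤ C) : 1 ≤ p.radius := by
  exact_mod_cast p.le_radius_of_bound C (r := 1) (by simpa using hp)

theorem hasFPowerSeriesOnBall_ev (f : H2) :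
    HasFPowerSeriesOnBall (ev f) (.ofScalars ℂ f) 0 1 := by
  have h_radius : 1 ≤ (FormalMultilinearSeries.ofScalars ℂ f).radius :=
    one_le_radius_of_norm_le (C := ‖f‖) fun n => by
      simpa using lp.norm_apply_le_norm two_ne_zero f n
  refine ((FormalMultilinearSeries.hasFPowerSeriesOnBall _
    (one_pos.trans_le h_radius)).mono one_pos h_radius).congr fun z _ => ?_
  simp [FormalMultilinearSeries.sum, ev, mul_comm]

theorem hasSum_ev (f : H2) {z : ℂ} (hz : z ∈ Disc) : HasSum (fun n => f n * z ^ n) (ev f z) := by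
  have h := (hasFPowerSeriesOnBall_ev f).hasSum (y := z) (by simpa [Disc, ← ofReal_norm] using hz)
  simpa [mul_comm] using h

theorem analyticOnNhd_ev (f : H2) : AnalyticOnNhd ℂ (ev f) Disc := by
  simpa [Disc, ← Metric.eball_ofReal] using (hasFPowerSeriesOnBall_ev f).analyticOnNhd

theorem eq_of_eqOn_ev {f g : H2} (h : EqOn (ev f) (ev g) Disc) : f = g := by
  have h_nhds : ev f =ᶠ[𝓝 0] ev g := h.eventuallyEq_of_mem (ball_mem_nhds 0 one_pos)
  have h_series := ((hasFPowerSeriesOnBall_ev f).hasFPowerSeriesAt.congr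
    h_nhds).eq_formalMultilinearSeries (hasFPowerSeriesOnBall_ev g).hasFPowerSeriesAt
  exact Subtype.ext (FormalMultilinearSeries.ofScalars_series_injective ℂ ℂ h_series)

theorem circleAverage_sq_norm_ev_le (f : H2) {r : ℝ} (hr : |r| < 1) :
    circleAverage (fun z => ‖ev f z‖ ^ 2) 0 r ≤ ‖f‖ ^ 2 := by
  have h_norm : HasSum (fun n => ‖f n‖ ^ 2) (‖f‖ ^ 2) := by
    simpa using lp.hasSum_norm (p := 2) (by simp) f
  have parseval := hasSum_sq_norm_circleAverage (c := 0)
    fun z hz => by simpa using hasSum_ev f (sphere_subset_ball hr hz)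
  refine hasSum_le (fun n => ?_) parseval h_norm
  rw [norm_mul, norm_pow, Complex.norm_real, norm_eq_abs]
  gcongr
  exact mul_le_of_le_one_right (norm_nonneg _) (pow_le_one₀ (abs_nonneg r) hr.le)

theorem exists_ev_eq_of_circleAverage_le {F : ℂ → ℂ} {C : ℝ} (hF : DifferentiableOn ℂ F Disc)
    (hC : ∀ r ∈ Ioo (0 : ℝ) 1, circleAverage (fun z => ‖F z‖ ^ 2) 0 r ≤ C) :
    ∃ h : H2, ∀ z ∈ Disc, ev h z = F z := by
  let a (n : ℕ) : ℂ := (n.factorial : ℂ)⁻¹ * iteratedDeriv n F 0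
  have taylor (z : ℂ) (hz : z ∈ Disc) : HasSum (fun n => a n * (z - 0) ^ n) (F z) := by
    simpa only [smul_eq_mul, mul_assoc, mul_comm (iteratedDeriv _ F 0), a] using
      Complex.hasSum_taylorSeries_on_ball hF hz
  have ha : Memℓp a 2 :=
    memℓp_gen (by simpa using summable_sq_norm_of_circleAverage_le taylor hC)
  exact ⟨⟨a, ha⟩, fun z hz => by simpa [ev] using (taylor z hz).tsum_eq⟩

theorem exists_ev_eq_mul {θ : ℂ → ℂ} {C : ℝ} (hθ : DifferentiableOn ℂ θ Disc)
    (hC : ∀ z ∈ Disc, ‖θ z‖ ≤ C) (f : H2) : ∃ h : H2, ∀ z ∈ Disc, ev h z = θ z * ev f z := by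
  have h_diff : DifferentiableOn ℂ (fun z => θ z * ev f z) Disc :=
    hθ.mul (analyticOnNhd_ev f).differentiableOn
  refine exists_ev_eq_of_circleAverage_le (C := C ^ 2 * ‖f‖ ^ 2) h_diff fun r hr => ?_
  have h_abs : |r| < 1 := by rw [abs_of_pos hr.1]; exact hr.2
  have h_sphere : sphere 0 |r| ⊆ Disc := sphere_subset_ball h_abs
  have h_int {g : ℂ → ℂ} (hg : DifferentiableOn ℂ g Disc) :
      CircleIntegrable (fun z => ‖g z‖ ^ 2) 0 r :=
    ((hg.continuousOn.mono h_sphere).norm.pow 2).circleIntegrable'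
  calc circleAverage (fun z => ‖θ z * ev f z‖ ^ 2) 0 r
      ≤ circleAverage (fun z => C ^ 2 * ‖ev f z‖ ^ 2) 0 r := by
        refine circleAverage_mono (h_int h_diff)
          ((h_int (analyticOnNhd_ev f).differentiableOn).const_mul _) fun z hz => ?_
        rw [norm_mul, mul_pow]
        gcongr
        exact hC z (h_sphere hz)
    _ = C ^ 2 * circleAverage (fun z => ‖ev f z‖ ^ 2) 0 r := circleAverage_fun_smul (a := C ^ 2)
    _ ≤ C ^ 2 * ‖f‖ ^ 2 := by gcongr; exact circleAverage_sq_norm_ev_le f h_abs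

theorem eq_of_mul_ev_eq {θ : ℂ → ℂ} (hθ : DifferentiableOn ℂ θ Disc)
    (hθne : ∃ z ∈ Disc, θ z ≠ 0) {f g : H2} (h : ∀ z ∈ Disc, θ z * ev f z = θ z * ev g z) :
    f = g := by
  have h_mul (z : ℂ) (hz : z ∈ Disc) : θ z * (ev f z - ev g z) = 0 := by
    rw [mul_sub, h z hz, sub_self]
  obtain h_zero | h_zero := (hθ.analyticOnNhd isOpen_ball).eq_zero_or_eq_zero_of_mul_eq_zero
    ((analyticOnNhd_ev f).sub (analyticOnNhd_ev g)) h_mul (convex_ball 0 1).isPreconnected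
  · obtain ⟨z, hz, hz0⟩ := hθne
    exact absurd (h_zero z hz) hz0
  · exact eq_of_eqOn_ev fun z hz => sub_eq_zero.mp (h_zero z hz)

theorem dirMem_of_finite_support {f : H2} (hf : (Function.support f).Finite) : DirMem f :=
  summable_of_hasFiniteSupport (hf.subset fun n hn hfn => hn (by simp [hfn]))

theorem dense_setOf_dirMem : Dense {f : H2 | DirMem f} := by
  intro f
  refine mem_closure_of_tendsto (lp.hasSum_single ENNReal.ofNat_ne_top f) (.of_forall fun s => ?_)
  refine dirMem_of_finite_support (s.finite_toSet.subset fun n hn => ?_)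
  by_contra hns
  refine hn ?_
  rw [lp.coeFn_sum, Finset.sum_apply]
  exact Finset.sum_eq_zero fun i hi => lp.single_apply_ne _ _ _ fun h => hns (h ▸ hi)

theorem exists_not_dirMem : ∃ f : H2, ¬ DirMem f := by
  have h_norm (n : ℕ) : ‖((n + 1 : ℕ) : ℂ)⁻¹‖ = ((n + 1 : ℕ) : ℝ)⁻¹ := by
    rw [norm_inv, Complex.norm_natCast]
  have h_mem : Memℓp (fun n : ℕ => ((n + 1 : ℕ) : ℂ)⁻¹) 2 := by
    have h_sq : Summable fun n : ℕ => (((n + 1 : ℕ) : ℝ) ^ 2)⁻¹ :=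
      (summable_nat_add_iff 1).2 (Real.summable_nat_pow_inv.2 one_lt_two)
    exact memℓp_gen (h_sq.congr fun n => by simp [-Nat.cast_add, h_norm])
  refine ⟨⟨_, h_mem⟩, fun h => Real.not_summable_natCast_inv ((summable_nat_add_iff 1).1 ?_)⟩
  refine h.congr fun n => ?_
  change ‖((n + 1 : ℕ) : ℂ)⁻¹‖ ^ 2 * ((n : ℝ) + 1) = ((n + 1 : ℕ) : ℝ)⁻¹
  rw [h_norm, ← Nat.cast_add_one]
  field_simp

theorem not_isClosed_setOf_dirMem : ¬ IsClosed {f : H2 | DirMem f} := by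
  intro h_closed
  obtain ⟨f, hf⟩ := exists_not_dirMem
  exact hf (h_closed.closure_subset (dense_setOf_dirMem f))

theorem stmt13_general (θ : ℂ → ℂ) (hθa : DifferentiableOn ℂ θ Disc)
    (hθb : ∃ C : ℝ, ∀ z ∈ Disc, ‖θ z‖ ≤ C) (hθne : ∃ z ∈ Disc, θ z ≠ 0) :
    {f : H2 | ∃ h : H2, (∃ f', ThetaRel θ h f') ∧ ∀ z ∈ Disc, ev h z = θ z * ev f z}
      = {f : H2 | DirMem f} ∧
    ¬ IsClosed {f : H2 | DirMem f} := by
  refine ⟨Subset.antisymm ?_ ?_, not_isClosed_setOf_dirMem⟩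
  · rintro f ⟨h, ⟨f', hf', h_eq'⟩, h_eq⟩
    obtain rfl : f = f' :=
      eq_of_mul_ev_eq hθa hθne fun z hz => (h_eq z hz).symm.trans (h_eq' z hz)
    exact hf'
  · intro f hf
    obtain ⟨C, hC⟩ := hθb
    obtain ⟨h, h_eq⟩ := exists_ev_eq_mul hθa hC f
    exact ⟨h, ⟨f, hf, h_eq⟩, h_eq⟩

/- STATEMENT 13: Let 𝒟 be the Dirichlet space and θ a bounded analytic function on 𝔻 with
‖θ‖_∞ = 1 and θ(0) > 0, and M = θ𝒟 with ‖θf‖_M := ‖f‖_𝒟.  Then the S*-invariant vector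
subspace N = {f ∈ H²(𝔻) : θf ∈ M} arising in the representation M = θN equals 𝒟, and 𝒟 is
not closed in H²(𝔻). -/
theorem stmt13
    (θ : ℂ → ℂ) (hθa : DifferentiableOn ℂ θ Disc)
    (hθb : ∃ C : ℝ, ∀ z ∈ Disc, ‖θ z‖ ≤ C)
    (hθ1 : sSup ((fun z => ‖θ z‖) '' Disc) = 1)
    (hθ0 : (θ 0).im = 0 ∧ 0 < (θ 0).re) :
    -- N = {f ∈ H²(𝔻) : θf ∈ M} equals the Dirichlet space 𝒟 …
    {f : H2 | ∃ h : H2, (∃ f', ThetaRel θ h f') ∧ ∀ z ∈ Disc, ev h z = θ z * ev f z}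
      = {f : H2 | DirMem f} ∧
    -- … which is not a closed subspace of H²(𝔻):
    ¬ IsClosed {f : H2 | DirMem f} := by
  exact stmt13_general θ hθa hθb ⟨0, by simp [Disc], fun h => by simp [h] at hθ0⟩
end
end
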